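/- Let T be a finite tree with root r, and let T_1, …, T_k be the connected components of T − r, where T_i is rooted at its unique vertex r_i adjacent to r in T. Define the toll n_0(S, s) = N_0(S) − N_0(S − s) for a rooted tree S with root s. Then n_0(T, r) = 1 if and only if n_0(T_i, r_i) = −1 for all i ∈ {1, …, k}; equivalently, n_0(T, r) = −1 if and only if n_0(T_i, r_i) = 1 for at least one i. -/

import Mathlib

/-!
Let `K` be the kernel of the adjacency operator of a bipartite graph `G`, let `K'` be that of
`G - r`, and let `b` be the functional on functions on `G - r` summing the values over the
neighbours of `r` (`rootForm`). The vectors of `K` vanishing at `r` are the vectors of `K'` killed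
by `b`, so this common subspace has codimension at most one in both `K` and `K'`.

If some vector of `K` is nonzero at `r`, self-adjointness makes `b` vanish on `K'`, and the toll is
`1`. Conversely, if `b` vanishes on `K'`, then the indicator of the neighbours of `r` lies in the
range of the adjacency operator of `G - r`. Bipartiteness allows a preimage supported on the colour
class of `r`, hence vanishing at the neighbours of `r`; it extends to a vector of `K` that is
nonzero at `r`. So the toll is `1` or `-1`, and it is `1` exactly when `K` has a vector nonzero at
`r`, which happens exactly when `b` vanishes on `K'` (`toll0_cases`).

For a tree `T`, each component of `T - r` contains exactly one neighbour of `r`, and kernel vectors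
of `T - r` restrict to, and extend by zero from, the components. Hence `b` is nonzero on `K'` iff
some branch has a kernel vector nonzero at its root (`rootForm_ne_iff`), that is, iff some branch
has toll `1`.
-/

/-- Multiplicity of `α` as an eigenvalue of a real matrix `M`:
the dimension over `ℝ` of the kernel of `M - α•I`. -/
noncomputable def eigMult {I : Type} [Fintype I] (M : Matrix I I ℝ) (α : ℝ) : ℕ :=
  letI := Classical.decEq I
  Module.finrank ℝ (LinearMap.ker (M - α • (1 : Matrix I I ℝ)).mulVecLin)

/-- Multiplicity `N_α(G)` of `α` as an adjacency eigenvalue of a finite simple graph. -/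
noncomputable def adjMult {V : Type} [Finite V] (G : SimpleGraph V) (α : ℝ) : ℕ :=
  letI := Fintype.ofFinite V
  letI := Classical.decRel G.Adj
  eigMult (G.adjMatrix ℝ) α

/-- The toll `n_0(G, r) = N_0(G) - N_0(G - r)` of the eigenvalue `0` at a root `r`. -/
noncomputable def toll0 {V : Type} [Finite V] (G : SimpleGraph V) (r : V) : ℤ :=
  (adjMult G 0 : ℤ) - (adjMult (G.induce ({r}ᶜ : Set V)) 0 : ℤ)

/-! ### The adjacency operator -/

open Classical in
/-- The adjacency operator of a finite graph on real functions on its vertices. -/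
noncomputable def adjOp {V : Type} [Finite V] (G : SimpleGraph V) : (V → ℝ) →ₗ[ℝ] (V → ℝ) where
  toFun x v :=
    letI := Fintype.ofFinite V
    ∑ w, if G.Adj v w then x w else 0
  map_add' x y := by
    funext v
    simp only [Pi.add_apply, ← Finset.sum_add_distrib]
    exact Finset.sum_congr rfl fun w _ => by split_ifs <;> simp
  map_smul' a x := by
    funext v
    simp [Finset.mul_sum]

open Classical in
lemma adjOp_apply {V : Type} [inst : Fintype V] (G : SimpleGraph V) (x : V → ℝ) (v : V) :
    adjOp G x v = ∑ w, if G.Adj v w then x w else 0 := by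
  change (@Finset.sum V ℝ _ (@Finset.univ V (Fintype.ofFinite V)) _) = _
  rw [Subsingleton.elim (Fintype.ofFinite V) inst]

lemma adjMult_zero {V : Type} [Finite V] (G : SimpleGraph V) :
    adjMult G 0 = Module.finrank ℝ (LinearMap.ker (adjOp G)) := by
  classical
  let := Fintype.ofFinite V
  have h : ∀ (d : DecidableEq V) (e : DecidableRel G.Adj),
      LinearMap.ker (G.adjMatrix ℝ - (0 : ℝ) • (1 : Matrix V V ℝ)).mulVecLin =
        LinearMap.ker (adjOp G) := by
    intro d e
    congr 1
    refine LinearMap.ext fun x => funext fun v => ?_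
    rw [adjOp_apply]
    simp only [zero_smul, sub_zero, Matrix.mulVecLin_apply, Matrix.mulVec, dotProduct,
      SimpleGraph.adjMatrix_apply, ite_mul, one_mul, zero_mul]
    exact Finset.sum_congr rfl fun w _ => by congr
  unfold adjMult eigMult
  exact congrArg (fun K : Submodule ℝ (V → ℝ) => Module.finrank ℝ K) (h _ _)

lemma adjOp_symm {V : Type} [Fintype V] (G : SimpleGraph V) (x y : V → ℝ) :
    ∑ v, y v * adjOp G x v = ∑ v, adjOp G y v * x v := by
  simp only [adjOp_apply, Finset.mul_sum, Finset.sum_mul]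
  rw [Finset.sum_comm]
  refine Finset.sum_congr rfl fun v _ => Finset.sum_congr rfl fun w _ => ?_
  by_cases h : G.Adj v w
  · simp [h, h.symm]
  · have h' : ¬ G.Adj w v := fun h' => h h'.symm
    simp [h, h']

/-- The range of a self-adjoint operator contains the orthogonal complement of its kernel. -/
lemma exists_adjOp_eq {V : Type} [Fintype V] (G : SimpleGraph V) (b : V → ℝ)
    (h : ∀ y, adjOp G y = 0 → ∑ v, y v * b v = 0) : ∃ z, adjOp G z = b := by
  classical
  by_contra hb
  obtain ⟨f, hf, hle⟩ := Submodule.exists_le_ker_of_notMem (p := LinearMap.range (adjOp G)) hb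
  have key : ∀ x, f x = ∑ v, f (Pi.single v 1) * x v := by
    intro x
    conv_lhs => rw [pi_eq_sum_univ' x]
    simp [mul_comm]
  apply hf
  rw [key]
  apply h (fun v => f (Pi.single v 1))
  funext u
  have h1 : f (adjOp G (Pi.single u 1)) = 0 := hle ⟨_, rfl⟩
  rw [key, adjOp_symm] at h1
  simpa [Pi.single_apply] using h1

lemma finrank_inf_ker_of_forall {E : Type} [AddCommGroup E] [Module ℝ E]
    (K : Submodule ℝ E) (f : E →ₗ[ℝ] ℝ) (h : ∀ x ∈ K, f x = 0) :
    Module.finrank ℝ ↥(K ⊓ LinearMap.ker f) = Module.finrank ℝ K := by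
  rw [inf_eq_left.mpr (show K ≤ LinearMap.ker f from h)]

lemma finrank_inf_ker_of_exists {E : Type} [AddCommGroup E] [Module ℝ E] [FiniteDimensional ℝ E]
    (K : Submodule ℝ E) (f : E →ₗ[ℝ] ℝ) (h : ∃ x ∈ K, f x ≠ 0) :
    Module.finrank ℝ ↥(K ⊓ LinearMap.ker f) + 1 = Module.finrank ℝ K := by
  obtain ⟨x, hx, hfx⟩ := h
  have hne : f.domRestrict K ≠ 0 := fun h0 => hfx (by
    have := LinearMap.congr_fun h0 ⟨x, hx⟩
    simpa using this)
  have hr := (f.domRestrict K).finrank_range_add_finrank_ker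
  rw [LinearMap.range_eq_top.mpr (LinearMap.surjective hne), finrank_top, Module.finrank_self] at hr
  rw [← hr, add_comm, LinearMap.ker_domRestrict, inf_comm]
  congr 1
  have hm : (LinearMap.ker f) ⊓ K = Submodule.map K.subtype ((LinearMap.ker f).submoduleOf K) := by
    rw [Submodule.submoduleOf, Submodule.map_comap_subtype, inf_comm]
  rw [hm]
  exact (Submodule.equivMapOfInjective K.subtype K.injective_subtype _).finrank_eq.symm

/-! ### Deleting a vertex -/

lemma sum_root_split {V : Type} [Fintype V] (r : V) [Fintype ↥({r}ᶜ : Set V)] (f : V → ℝ) :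
    ∑ w, f w = f r + ∑ w : ↥({r}ᶜ : Set V), f w := by
  classical
  rw [Fintype.sum_eq_add_sum_compl r]
  congr 1
  exact Finset.sum_subtype _ (by simp) f

open Classical in
/-- The functional on functions on `G - r` that sums the values over the neighbours of `r`. -/
noncomputable def rootForm {V : Type} [Finite V] (G : SimpleGraph V) (r : V) :
    (↥({r}ᶜ : Set V) → ℝ) →ₗ[ℝ] ℝ where
  toFun y :=
    letI := Fintype.ofFinite ↥({r}ᶜ : Set V)
    ∑ w : ↥({r}ᶜ : Set V), y w * (if G.Adj r w then 1 else 0)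
  map_add' x y := by simp only [Pi.add_apply, ← Finset.sum_add_distrib, add_mul]
  map_smul' a x := by simp [Finset.mul_sum]

open Classical in
lemma rootForm_apply {V : Type} [Finite V] (G : SimpleGraph V) (r : V)
    [inst : Fintype ↥({r}ᶜ : Set V)]
    (y : ↥({r}ᶜ : Set V) → ℝ) :
    rootForm G r y = ∑ w : ↥({r}ᶜ : Set V), y w * (if G.Adj r w then 1 else 0) := by
  change (@Finset.sum _ ℝ _ (@Finset.univ _ (Fintype.ofFinite ↥({r}ᶜ : Set V))) _) = _
  rw [Subsingleton.elim (Fintype.ofFinite ↥({r}ᶜ : Set V)) inst]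

lemma adjOp_root {V : Type} [Fintype V] (G : SimpleGraph V) (r : V) (x : V → ℝ) :
    adjOp G x r = rootForm G r (fun w => x w) := by
  classical
  rw [adjOp_apply, rootForm_apply, sum_root_split r]
  simp

open Classical in
lemma adjOp_ne_root {V : Type} [Fintype V] (G : SimpleGraph V) (r : V) (x : V → ℝ)
    (v : ↥({r}ᶜ : Set V)) :
    adjOp G x v = (if G.Adj r v then 1 else 0) * x r
      + adjOp (G.induce ({r}ᶜ : Set V)) (fun w => x w) v := by
  rw [adjOp_apply, adjOp_apply, sum_root_split r]
  simp [G.adj_comm r]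

open Classical in
/-- Kernel vectors of `G` vanishing at `r` are the kernel vectors of `G - r` on which `rootForm`
vanishes, extended by zero. -/
lemma finrank_ker_inf {V : Type} [Fintype V] (G : SimpleGraph V) (r : V) :
    Module.finrank ℝ ↥(LinearMap.ker (adjOp G) ⊓
      LinearMap.ker (LinearMap.proj (R := ℝ) (φ := fun _ : V => ℝ) r)) =
    Module.finrank ℝ ↥(LinearMap.ker (adjOp (G.induce ({r}ᶜ : Set V))) ⊓
      LinearMap.ker (rootForm G r)) := by
  let e : (↥({r}ᶜ : Set V) → ℝ) →ₗ[ℝ] (V → ℝ) :=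
    Function.ExtendByZero.linearMap ℝ Subtype.val
  have ev : ∀ y (w : ↥({r}ᶜ : Set V)), e y w = y w := fun y w =>
    Subtype.val_injective.extend_apply y 0 w
  have er : ∀ y, e y r = 0 := fun y => Function.extend_apply' y (0 : V → ℝ) r (by rintro ⟨w, hw⟩; exact w.2 hw)
  have he : Function.Injective e := fun y y' h => by
    funext w
    rw [← ev y, ← ev y', h]
  rw [(Submodule.equivMapOfInjective e he _).finrank_eq]
  suffices h : LinearMap.ker (adjOp G) ⊓ LinearMap.ker (LinearMap.proj r) =
      Submodule.map e (LinearMap.ker (adjOp (G.induce ({r}ᶜ : Set V))) ⊓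
        LinearMap.ker (rootForm G r)) by rw [h]
  ext x
  simp only [Submodule.mem_inf, LinearMap.mem_ker, LinearMap.proj_apply, Submodule.mem_map]
  constructor
  · rintro ⟨hx, hr⟩
    refine ⟨fun w => x w, ⟨?_, ?_⟩, ?_⟩
    · funext v
      have := adjOp_ne_root G r x v
      simpa [hx, hr] using this.symm
    · rw [← adjOp_root, hx]; rfl
    · funext v
      by_cases hv : v = r
      · rw [hv, er, hr]
      · exact ev _ ⟨v, hv⟩
  · rintro ⟨y, ⟨hy, hf⟩, rfl⟩
    refine ⟨?_, er y⟩
    funext v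
    by_cases hv : v = r
    · subst hv
      rw [adjOp_root]
      simp [ev, hf]
    · have := adjOp_ne_root G r (e y) ⟨v, hv⟩
      simpa [ev, er, hy] using this

/-- If `rootForm` vanishes on the kernel of `G - r` and `G` is bipartite, then `G` has a kernel
vector with value `1` at `r`. -/
lemma exists_ker_ne_zero {V : Type} [Fintype V] (G : SimpleGraph V) (r : V) (hG : G.Colorable 2)
    (h : ∀ y, adjOp (G.induce ({r}ᶜ : Set V)) y = 0 → rootForm G r y = 0) :
    ∃ x, adjOp G x = 0 ∧ x r = 1 := by
  classical
  obtain ⟨col⟩ := hG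
  obtain ⟨z, hz⟩ := exists_adjOp_eq (G.induce ({r}ᶜ : Set V))
    (fun w => if G.Adj r w then 1 else 0) fun y hy => by rw [← rootForm_apply]; exact h y hy
  have h2 : ∀ a b c : Fin 2, a ≠ b → b ≠ c → a = c := by decide
  -- The part of `z` on the colour class of `r` still solves the equations, since the right-hand
  -- side is supported on the other class, and it vanishes on the neighbourhood of `r`.
  refine ⟨fun v => if hv : v = r then 1 else if col v = col r then - z ⟨v, hv⟩ else 0, ?_, by simp⟩
  funext v
  by_cases hv : v = r
  · subst hv
    rw [adjOp_root, rootForm_apply]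
    refine Finset.sum_eq_zero fun w _ => ?_
    by_cases hw : G.Adj v w
    · have := (col.valid hw).symm
      have hwv : (w : V) ≠ v := w.2
      simp [this, hwv]
    · simp [hw]
  · have h1 := adjOp_ne_root G r
      (fun v => if hv : v = r then 1 else if col v = col r then - z ⟨v, hv⟩ else 0) ⟨v, hv⟩
    have hzv := congrFun hz ⟨v, hv⟩
    rw [adjOp_apply] at hzv h1
    rw [adjOp_apply, h1, adjOp_apply]
    by_cases hc : col v = col r
    · have hna : ¬ G.Adj r v := fun ha => col.valid ha hc.symm
      simp only [hna, if_false, zero_mul, zero_add]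
      refine Finset.sum_eq_zero fun w _ => ?_
      have hwr : (w : V) ≠ r := w.2
      by_cases ha : (G.induce ({r}ᶜ : Set V)).Adj ⟨v, hv⟩ w
      · have : col w ≠ col r := fun h' => col.valid (show G.Adj v w from ha) (hc.trans h'.symm)
        simp [hwr, this]
      · rw [if_neg ha]
    · simp only [dif_pos, mul_one, Pi.zero_apply]
      rw [← hzv, ← Finset.sum_add_distrib]
      refine Finset.sum_eq_zero fun w _ => ?_
      have hwr : (w : V) ≠ r := w.2
      by_cases ha : (G.induce ({r}ᶜ : Set V)).Adj ⟨v, hv⟩ w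
      · have : col w = col r :=
          h2 _ _ _ (col.valid (show G.Adj v w from ha)).symm hc
        rw [if_pos ha, if_pos ha, dif_neg hwr, if_pos this, add_neg_cancel]
      · rw [if_neg ha, if_neg ha, add_zero]

/-- A kernel vector of `G` that is nonzero at `r` forces `rootForm` to vanish on the kernel of
`G - r`, by self-adjointness of the adjacency operator. -/
lemma rootForm_eq_zero {V : Type} [Fintype V] (G : SimpleGraph V) (r : V) (x : V → ℝ)
    (hx : adjOp G x = 0) (hr : x r ≠ 0) (y : ↥({r}ᶜ : Set V) → ℝ)
    (hy : adjOp (G.induce ({r}ᶜ : Set V)) y = 0) : rootForm G r y = 0 := by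
  classical
  have h1 := adjOp_symm (G.induce ({r}ᶜ : Set V)) (fun w => x w) y
  have h2 : ∀ v : ↥({r}ᶜ : Set V), adjOp (G.induce ({r}ᶜ : Set V)) (fun w => x w) v =
      - ((if G.Adj r v then 1 else 0) * x r) := fun v => by
    have := adjOp_ne_root G r x v
    rw [hx] at this
    simp only [Pi.zero_apply] at this
    linarith
  simp only [h2, hy, Pi.zero_apply, zero_mul, Finset.sum_const_zero] at h1
  have h3 : rootForm G r y * x r = 0 := by
    rw [rootForm_apply, Finset.sum_mul, ← neg_eq_zero, ← Finset.sum_neg_distrib]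
    refine Eq.trans ?_ h1
    exact Finset.sum_congr rfl fun v _ => by ring
  exact (mul_eq_zero.mp h3).resolve_right hr

/-- At a vertex `r` of a bipartite graph the toll is `1` or `-1`, and the two cases are detected
both by the kernel of `G` at `r` and by `rootForm` on the kernel of `G - r`. The dimensions of both
kernels are compared with that of the space in `finrank_ker_inf`. -/
lemma toll0_cases {V : Type} [Fintype V] (G : SimpleGraph V) (r : V) (hG : G.Colorable 2) :
    (toll0 G r = 1 ∧ (∃ x, adjOp G x = 0 ∧ x r ≠ 0) ∧
      ∀ y, adjOp (G.induce ({r}ᶜ : Set V)) y = 0 → rootForm G r y = 0) ∨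
    (toll0 G r = -1 ∧ (∀ x, adjOp G x = 0 → x r = 0) ∧
      ∃ y, adjOp (G.induce ({r}ᶜ : Set V)) y = 0 ∧ rootForm G r y ≠ 0) := by
  classical
  have hd := finrank_ker_inf G r
  unfold toll0
  rw [adjMult_zero, adjMult_zero]
  by_cases h : ∀ y, adjOp (G.induce ({r}ᶜ : Set V)) y = 0 → rootForm G r y = 0
  · left
    obtain ⟨x, hx, hxr⟩ := exists_ker_ne_zero G r hG h
    have hxr' : x r ≠ 0 := by rw [hxr]; exact one_ne_zero
    refine ⟨?_, ⟨x, hx, hxr'⟩, h⟩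
    rw [finrank_inf_ker_of_forall _ (rootForm G r) h] at hd
    have := finrank_inf_ker_of_exists (LinearMap.ker (adjOp G)) (LinearMap.proj r) ⟨x, hx, hxr'⟩
    omega
  · right
    push Not at h
    obtain ⟨y, hy, hyr⟩ := h
    have hK : ∀ x, adjOp G x = 0 → x r = 0 := fun x hx => by
      by_contra hr
      exact hyr (rootForm_eq_zero G r x hx hr y hy)
    refine ⟨?_, hK, y, hy, hyr⟩
    rw [finrank_inf_ker_of_forall (LinearMap.ker (adjOp G)) (LinearMap.proj r) hK] at hd
    have := finrank_inf_ker_of_exists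
      (LinearMap.ker (adjOp (G.induce ({r}ᶜ : Set V)))) (rootForm G r) ⟨y, hy, hyr⟩
    omega

/-! ### Branches of a forest -/

/-- In an acyclic graph, `r` has at most one neighbour in each component of the graph minus `r`. -/
lemma nbr_unique {V : Type} (T : SimpleGraph V) (hT : T.IsAcyclic) (r : V)
    (a b : ↥({r}ᶜ : Set V)) (ha : T.Adj r a) (hb : T.Adj r b)
    (hab : (T.induce ({r}ᶜ : Set V)).Reachable a b) : a = b := by
  classical
  by_contra hne
  obtain ⟨p, hp⟩ := hab.exists_isPath
  let f := (SimpleGraph.Embedding.induce (G := T) ({r}ᶜ : Set V))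
  have hq : (p.map f.toHom).IsPath := hp.map f.injective
  have hne' : (a : V) ≠ b := fun h => hne (Subtype.ext h)
  have hq' : (SimpleGraph.Walk.cons ha.symm (SimpleGraph.Walk.cons hb .nil)).IsPath := by
    simp [SimpleGraph.Walk.cons_isPath_iff, hb.ne, ha.ne', hne']
  have heq := (hT.subsingleton_path _ _).elim ⟨_, hq⟩ ⟨_, hq'⟩
  have hs : r ∈ (p.map f.toHom).support := by
    have hw := congrArg Subtype.val heq
    change p.map f.toHom = SimpleGraph.Walk.cons ha.symm (SimpleGraph.Walk.cons hb .nil) at hw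
    rw [hw]
    exact List.mem_cons_of_mem _ (SimpleGraph.Walk.start_mem_support _)
  rw [SimpleGraph.Walk.support_map, List.mem_map] at hs
  obtain ⟨w, _, hw⟩ := hs
  exact w.2 hw

lemma adjOp_restrict {V : Type} [Fintype V] (G : SimpleGraph V) (c : G.ConnectedComponent)
    (y : V → ℝ) (hy : adjOp G y = 0) :
    adjOp (G.induce c.supp) (fun w => y w) = 0 := by
  classical
  funext v
  have h := congrFun hy v
  rw [adjOp_apply] at h ⊢
  refine Eq.trans ?_ h
  refine Finset.sum_of_injOn Subtype.val Subtype.val_injective.injOn (by simp) ?_ (by simp)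
  intro w _ hw
  refine if_neg fun ha => hw ?_
  have : w ∈ c.supp := (c.mem_supp_congr_adj ha).mp v.2
  exact ⟨⟨w, this⟩, by simp⟩

lemma adjOp_extend {V : Type} [Fintype V] (G : SimpleGraph V) (c : G.ConnectedComponent)
    (y : V → ℝ) (hc : ∀ v, v ∉ c.supp → y v = 0)
    (hy : adjOp (G.induce c.supp) (fun w => y w) = 0) : adjOp G y = 0 := by
  classical
  funext v
  by_cases hv : v ∈ c.supp
  · have h := congrFun hy ⟨v, hv⟩
    rw [adjOp_apply] at h ⊢
    refine Eq.trans ?_ h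
    symm
    refine Finset.sum_of_injOn Subtype.val Subtype.val_injective.injOn (by simp) ?_ (by simp)
    intro w _ hw
    refine if_neg fun ha => hw ?_
    exact ⟨⟨w, (c.mem_supp_congr_adj ha).mp hv⟩, by simp⟩
  · rw [adjOp_apply]
    refine Finset.sum_eq_zero fun w _ => ?_
    split_ifs with ha
    · exact hc w fun hw => hv ((c.mem_supp_congr_adj ha).mpr hw)
    · rfl

/-- By acyclicity `root c` is the only neighbour of `r` in the component `c`, so `rootForm` is the
sum of the values at the branch roots; restriction to a component and extension by zero preserve
kernel vectors. -/
lemma rootForm_ne_iff {V : Type} [Fintype V] (T : SimpleGraph V) (hT : T.IsAcyclic) (r : V)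
    (root : (T.induce ({r}ᶜ : Set V)).ConnectedComponent → ↥({r}ᶜ : Set V))
    (hmem : ∀ c, root c ∈ c.supp) (hadj : ∀ c, T.Adj r (root c).val) :
    (∃ y, adjOp (T.induce ({r}ᶜ : Set V)) y = 0 ∧ rootForm T r y ≠ 0) ↔
    ∃ c : (T.induce ({r}ᶜ : Set V)).ConnectedComponent, ∃ x, adjOp ((T.induce ({r}ᶜ : Set V)).induce c.supp) x = 0 ∧
      x ⟨root c, hmem c⟩ ≠ 0 := by
  classical
  have huniq : ∀ w : ↥({r}ᶜ : Set V), T.Adj r w →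
      w = root ((T.induce ({r}ᶜ : Set V)).connectedComponentMk w) := fun w hw =>
    nbr_unique T hT r _ _ hw (hadj _) (SimpleGraph.ConnectedComponent.exact (hmem _).symm)
  constructor
  · rintro ⟨y, hy, hne⟩
    rw [rootForm_apply] at hne
    obtain ⟨w, _, hw⟩ := Finset.exists_ne_zero_of_sum_ne_zero hne
    have ha : T.Adj r w := by
      by_contra h; simp [h] at hw
    refine ⟨(T.induce ({r}ᶜ : Set V)).connectedComponentMk w, fun u => y u,
      adjOp_restrict _ _ y hy, ?_⟩
    show y (root _) ≠ 0
    rw [← huniq w ha]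
    exact left_ne_zero_of_mul hw
  · rintro ⟨c, x, hx, hne⟩
    let y : ↥({r}ᶜ : Set V) → ℝ := fun w => if h : w ∈ c.supp then x ⟨w, h⟩ else 0
    have hyx : (fun w : c.supp => y w) = x := by
      funext w; exact dif_pos w.2
    refine ⟨y, adjOp_extend _ c y (fun v hv => dif_neg hv) (by rw [hyx]; exact hx), ?_⟩
    have : rootForm T r y = y (root c) := by
      rw [rootForm_apply, Finset.sum_eq_single (root c)]
      · simp [hadj c]
      · intro w _ hw
        by_cases ha : T.Adj r w
        · have hwc : w ∉ c.supp := fun h => hw (by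
            rw [huniq w ha]
            exact congrArg root h)
          rw [show y w = 0 from dif_neg hwc, zero_mul]
        · simp [ha]
      · simp
    rw [this]
    rw [show y (root c) = x ⟨root c, hmem c⟩ from dif_pos (hmem c)]
    exact hne

/-- For a finite tree `T` rooted at `r`, with root branches the connected components of
`T - r` each rooted at its unique vertex adjacent to `r`: `n_0(T, r) = 1` iff
`n_0(T_i, r_i) = -1` for all branches; equivalently, `n_0(T, r) = -1` iff
`n_0(T_i, r_i) = 1` for at least one branch. -/
theorem stmt8 {V : Type} [Finite V] (T : SimpleGraph V) (hT : T.IsTree) (r : V)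
    (root : (T.induce ({r}ᶜ : Set V)).ConnectedComponent → ↥({r}ᶜ : Set V))
    (hmem : ∀ c, root c ∈ c.supp) (hadj : ∀ c, T.Adj r (root c).val) :
    (toll0 T r = 1 ↔
      ∀ c, toll0 ((T.induce ({r}ᶜ : Set V)).induce c.supp) ⟨root c, hmem c⟩ = -1) ∧
    (toll0 T r = -1 ↔
      ∃ c, toll0 ((T.induce ({r}ᶜ : Set V)).induce c.supp) ⟨root c, hmem c⟩ = 1) := by
  classical
  let := Fintype.ofFinite V
  have hac : T.IsAcyclic := hT.isAcyclic
  have hiff := rootForm_ne_iff T hac r root hmem hadj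
  have hbr := fun c => toll0_cases ((T.induce ({r}ᶜ : Set V)).induce c.supp) ⟨root c, hmem c⟩
    ((hac.induce _).induce _).colorable_two
  rcases toll0_cases T r hac.colorable_two with ⟨h1, _, h2⟩ | ⟨h1, _, h2⟩
  · have hall : ∀ c, toll0 ((T.induce ({r}ᶜ : Set V)).induce c.supp) ⟨root c, hmem c⟩ = -1 := by
      intro c
      rcases hbr c with ⟨_, ⟨x, hx, hxr⟩, _⟩ | ⟨h, _⟩
      · obtain ⟨y, hy, hyr⟩ := hiff.mpr ⟨c, x, hx, hxr⟩
        exact absurd (h2 y hy) hyr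
      · exact h
    rw [h1]
    refine ⟨iff_of_true rfl hall, iff_of_false (by norm_num) ?_⟩
    rintro ⟨c, hc⟩
    rw [hall c] at hc
    norm_num at hc
  · obtain ⟨c, x, hx, hxr⟩ := hiff.mp h2
    have hc : toll0 ((T.induce ({r}ᶜ : Set V)).induce c.supp) ⟨root c, hmem c⟩ = 1 := by
      rcases hbr c with ⟨h, _⟩ | ⟨_, h, _⟩
      · exact h
      · exact absurd (h x hx) hxr
    rw [h1]
    refine ⟨iff_of_false (by norm_num) fun h => ?_, iff_of_true rfl ⟨c, hc⟩⟩
    have := h c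
    rw [hc] at this
    norm_num at this
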